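/- Under the square-potential pinning measure P̃_{N,a,b} with density proportional to exp(−H(φ) + b∑_{x∈Λ_N} 1_{φ(x)∈[0,a]}), the probability of the hard-wall event Ω_N⁺ = {φ ≥ 0 on Λ_N} satisfies P̃_{N,a,b}(Ω_N⁺) ≥ (Z_N / Z̃_{N,a,b}) · ∑_{A ⊆ Λ_N} exp(J'|A|) · P_{A^c}(Ω_{A^c}⁺), where J' = log(e^b − 1) + log c + log(min(1/2, a)) and c = c(d) is the constant from the single-site Gaussian bound. -/

import Mathlib

open MeasureTheory Real Finset

noncomputable section

/-- The nearest neighbours of a point of `ℤ^d`. -/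
def nbrs (d : ℕ) (x : Fin d → ℤ) : Finset (Fin d → ℤ) :=
  (Finset.univ : Finset (Fin d × Bool)).image
    (fun p => Function.update x p.1 (x p.1 + if p.2 then 1 else -1))

/-- Outer boundary of a finite subset of `ℤ^d`. -/
def bdry (d : ℕ) (A : Finset (Fin d → ℤ)) : Finset (Fin d → ℤ) :=
  A.biUnion (nbrs d) \ A

/-- The Gaussian free field Hamiltonian
`H_A(φ) = (1/8d) ∑_{x,y ∈ A ∪ ∂A, |x-y| = 1} (φ x - φ y)²`. -/
def ham (d : ℕ) (A : Finset (Fin d → ℤ)) (φ : (Fin d → ℤ) → ℝ) : ℝ :=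
  (1 / (8 * d)) * ∑ x ∈ A ∪ bdry d A, ∑ y ∈ A ∪ bdry d A,
    if y ∈ nbrs d x then (φ x - φ y) ^ 2 else 0

/-- Extension of a field on `A` by zero boundary conditions. -/
def extz {d : ℕ} (A : Finset (Fin d → ℤ)) (ψ : A → ℝ) : (Fin d → ℤ) → ℝ :=
  fun x => if h : x ∈ A then ψ ⟨x, h⟩ else 0

/-- Unnormalized density of the zero-boundary GFF on `A`. -/
def gffDensity (d : ℕ) (A : Finset (Fin d → ℤ)) (ψ : A → ℝ) : ℝ :=
  Real.exp (-ham d A (extz A ψ))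

/-- Partition function of the zero-boundary GFF on `A`. -/
def gffZ (d : ℕ) (A : Finset (Fin d → ℤ)) : ℝ :=
  ∫ ψ : A → ℝ, gffDensity d A ψ

/-- The zero-boundary Gaussian free field measure on `A ⊂ ℤ^d`. -/
def gff (d : ℕ) (A : Finset (Fin d → ℤ)) : Measure (A → ℝ) :=
  (ENNReal.ofReal (gffZ d A))⁻¹ •
    volume.withDensity (fun ψ => ENNReal.ofReal (gffDensity d A ψ))

/-- The box `Λ_N = {-⌊N/2⌋, …, ⌊N/2⌋}^d`. -/
def box (d N : ℕ) : Finset (Fin d → ℤ) :=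
  Fintype.piFinset (fun _ => Finset.Icc (-(N / 2 : ℤ)) (N / 2 : ℤ))

/-- Unnormalized density of the square-well pinned field on `Λ_N`. -/
def pinDensity (d N : ℕ) (a b : ℝ) (ψ : box d N → ℝ) : ℝ :=
  Real.exp (-ham d (box d N) (extz (box d N) ψ) +
    b * ∑ x : box d N, (if ψ x ∈ Set.Icc 0 a then (1 : ℝ) else 0))

/-- Partition function of the pinned field. -/
def pinZ (d N : ℕ) (a b : ℝ) : ℝ := ∫ ψ : box d N → ℝ, pinDensity d N a b ψ

/-- The square-well pinning measure `P̃_{N,a,b}` on the box `Λ_N`. -/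
def pin (d N : ℕ) (a b : ℝ) : Measure (box d N → ℝ) :=
  (ENNReal.ofReal (pinZ d N a b))⁻¹ •
    volume.withDensity (fun ψ => ENNReal.ofReal (pinDensity d N a b ψ))

/-- The number of pinned points `ξ̃_N`. -/
def numPinned (d N : ℕ) (a : ℝ) (ψ : box d N → ℝ) : ℕ :=
  (Finset.univ.filter (fun x : box d N => ψ x ∈ Set.Icc 0 a)).card

/-- The hard wall event `Ω⁺_B` within the box, for fields on `Λ_N`: nonnegativity
at every point of `B`. -/
def wallOn (d N : ℕ) (B : Finset (Fin d → ℤ)) : Set (box d N → ℝ) :=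
  {ψ | ∀ x : box d N, (x : Fin d → ℤ) ∈ B → 0 ≤ ψ x}

/-- The hard-wall event for the zero-boundary GFF on `A`. -/
def wall {d : ℕ} (A : Finset (Fin d → ℤ)) : Set (A → ℝ) := {ψ | ∀ x, 0 ≤ ψ x}

end

/-!
Write `Λ` for the box. Expanding `exp (b ∑ 1_{φ x ∈ [0, a]}) = ∏ (1 + (e ^ b - 1) 1_{φ x ∈ [0, a]})`
over the set `A` of pinned sites reduces the claim to
`P_Λ (φ ≥ 0 on Λ, φ ∈ [0, a] on A) ≥ (c min (1 / 2) a) ^ |A| P_{Λ \ A} (φ ≥ 0)` for each `A ⊆ Λ`.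

By the Markov property, the field on `Λ \ A` is the harmonic extension of its values on `A` plus an
independent zero-boundary field. The extension of a nonnegative field is nonnegative, so the wall on
`Λ \ A` costs at most what it costs the zero-boundary field. The field on `A` is Gaussian with a
diagonally dominant Stieltjes precision matrix, a property that survives integrating out a site.
Pin the sites of `A` one at a time: given the sites of `A` not yet integrated out, all of them in
`[0, a]`, the conditional mean of the next one lies in `[0, a]`, and its conditional variance is
bounded below by the diagonal of the precision matrix and above by the Green function. For `d ≥ 3`
the latter is bounded uniformly in `Λ`, by Pólya's flow to infinity in the octant `ℕ³`. So every
site costs at most a factor `c min (1 / 2) a`.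
-/

open scoped ENNReal

section StieltjesMatrix

variable {V : Type*}

/-- The quadratic form of the matrix `M` in the coordinates of the finite set `S`. Fields live on
all of `V`, so that passing to a subset of `S` requires no change of type. Below, `M` is called the
precision matrix of the Gaussian density `exp (-quadForm M S φ)`, although in the usual
normalization that is `2 • M`. -/
def quadForm (M : Matrix V V ℝ) (S : Finset V) (φ : V → ℝ) : ℝ :=
  ∑ x ∈ S, ∑ y ∈ S, M x y * φ x * φ y

/-- The Schur complement of `M` with respect to the site `x`: the precision matrix of the
Gaussian field with precision `M` after the coordinate `x` has been integrated out. -/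
noncomputable def schur (M : Matrix V V ℝ) (x : V) : Matrix V V ℝ :=
  Matrix.of fun y z => M y z - M y x * M x z / M x x

/-- The conditional mean at `x` of the Gaussian field with precision `M`, given that it equals `φ`
on `S`. -/
noncomputable def condMean (M : Matrix V V ℝ) (S : Finset V) (x : V) (φ : V → ℝ) : ℝ :=
  -(∑ y ∈ S, M x y * φ y) / M x x

/-- Symmetric positive definite matrices on `S` with nonpositive off-diagonal entries (Stieltjes
matrices) that are weakly diagonally dominant, with diagonal at most `L` and with inverse (the
Green function) at most `κ⁻¹` on the diagonal. The last condition is encoded variationally, by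
`κ * φ x ^ 2 ≤ quadForm M S φ`. -/
structure IsStieltjesOn (κ L : ℝ) (S : Finset V) (M : Matrix V V ℝ) : Prop where
  coercivity_pos : 0 < κ
  isSymm : M.IsSymm
  offDiag_nonpos : ∀ x ∈ S, ∀ y ∈ S, x ≠ y → M x y ≤ 0
  rowSum_nonneg : ∀ x ∈ S, 0 ≤ ∑ y ∈ S, M x y
  diag_le : ∀ x ∈ S, M x x ≤ L
  coercive : ∀ φ : V → ℝ, ∀ x ∈ S, κ * φ x ^ 2 ≤ quadForm M S φ

lemma dependsOn_quadForm (M : Matrix V V ℝ) (S : Finset V) : DependsOn (quadForm M S) S :=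
  fun _ _ h => Finset.sum_congr rfl fun x hx => Finset.sum_congr rfl fun y hy => by
    rw [h x hx, h y hy]

lemma measurable_quadForm (M : Matrix V V ℝ) (S : Finset V) : Measurable (quadForm M S) := by
  unfold quadForm
  fun_prop

lemma quadForm_of_subset (M : Matrix V V ℝ) {A T : Finset V} (hAT : A ⊆ T)
    {f : V → ℝ} (hf : ∀ x ∉ A, f x = 0) : quadForm M A f = quadForm M T f := by
  unfold quadForm
  rw [← Finset.sum_subset hAT fun x _ hx => by simp [hf x hx]]
  refine Finset.sum_congr rfl fun x _ => Finset.sum_subset hAT fun y _ hy => by simp [hf y hy]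

lemma dependsOn_condMean (M : Matrix V V ℝ) (S : Finset V) (x : V) :
    DependsOn (condMean M S x) S := fun φ ψ h => by
  have hsum : ∑ y ∈ S, M x y * φ y = ∑ y ∈ S, M x y * ψ y :=
    Finset.sum_congr rfl fun y hy => by rw [h y hy]
  rw [condMean, condMean, hsum]

lemma measurable_condMean (M : Matrix V V ℝ) (S : Finset V) (x : V) :
    Measurable (condMean M S x) := by
  unfold condMean
  fun_prop

lemma condMean_add (M : Matrix V V ℝ) (S : Finset V) (x : V) (φ ψ : V → ℝ) :
    condMean M S x (φ + ψ) = condMean M S x φ + condMean M S x ψ := by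
  simp only [condMean, Pi.add_apply, mul_add, Finset.sum_add_distrib]
  ring

lemma condMean_eq_of_subset (M : Matrix V V ℝ) {S T : Finset V} (hST : S ⊆ T) (x : V)
    {φ : V → ℝ} (hφ : ∀ y ∈ T, y ∉ S → φ y = 0) : condMean M T x φ = condMean M S x φ := by
  rw [condMean, condMean, Finset.sum_subset hST fun y hy hyS => by rw [hφ y hy hyS, mul_zero]]

namespace IsStieltjesOn

variable {κ L : ℝ} {S : Finset V} {M : Matrix V V ℝ} {x : V}

lemma le_diag (h : IsStieltjesOn κ L S M) (hx : x ∈ S) : κ ≤ M x x := by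
  classical
  simpa [quadForm, Pi.single_apply, hx] using h.coercive (Pi.single x 1) x hx

lemma diag_pos (h : IsStieltjesOn κ L S M) (hx : x ∈ S) : 0 < M x x :=
  h.coercivity_pos.trans_le (h.le_diag hx)

end IsStieltjesOn

variable [DecidableEq V]

lemma update_eq_of_dependsOn {β : Type*} {f : (V → ℝ) → β} {S : Finset V} (hf : DependsOn f S)
    {x : V} (hx : x ∉ S) (φ : V → ℝ) (t : ℝ) : f (Function.update φ x t) = f φ :=
  hf fun _ hy => Function.update_of_ne (ne_of_mem_of_not_mem hy hx) t φ

/-- Completing the square in the coordinate `x`. -/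
lemma quadForm_insert {M : Matrix V V ℝ} (hM : M.IsSymm) {S : Finset V} {x : V} (hx : x ∉ S)
    (hxx : M x x ≠ 0) (φ : V → ℝ) :
    quadForm M (insert x S) φ =
      quadForm (schur M x) S φ + M x x * (φ x - condMean M S x φ) ^ 2 := by
  have expand : quadForm M (insert x S) φ =
      M x x * φ x ^ 2 + 2 * φ x * (∑ y ∈ S, M x y * φ y) + quadForm M S φ := by
    have hcol : ∑ y ∈ S, M y x * φ y * φ x = φ x * ∑ y ∈ S, M x y * φ y := by
      rw [Finset.mul_sum]
      exact Finset.sum_congr rfl fun y _ => by rw [hM.apply]; ring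
    have hrow : ∑ y ∈ S, M x y * φ x * φ y = φ x * ∑ y ∈ S, M x y * φ y := by
      rw [Finset.mul_sum]
      exact Finset.sum_congr rfl fun y _ => by ring
    simp only [quadForm, Finset.sum_insert hx, Finset.sum_add_distrib, hcol, hrow]
    ring
  have schur_eq : quadForm (schur M x) S φ =
      quadForm M S φ - (∑ y ∈ S, M x y * φ y) ^ 2 / M x x := by
    simp only [quadForm, schur, Matrix.of_apply, sq, Finset.sum_mul_sum, Finset.sum_div,
      ← Finset.sum_sub_distrib]
    refine Finset.sum_congr rfl fun y _ => Finset.sum_congr rfl fun z _ => ?_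
    rw [hM.apply x y]
    ring
  rw [expand, schur_eq, condMean]
  field_simp
  ring

namespace IsStieltjesOn

variable {κ L : ℝ} {S : Finset V} {M : Matrix V V ℝ} {x : V}

lemma insert_offDiag_nonpos (h : IsStieltjesOn κ L (insert x S) M) (hx : x ∉ S) {y : V}
    (hy : y ∈ S) : M x y ≤ 0 :=
  h.offDiag_nonpos x (Finset.mem_insert_self x S) y (Finset.mem_insert_of_mem hy)
    (ne_of_mem_of_not_mem hy hx).symm

lemma condMean_nonneg (h : IsStieltjesOn κ L (insert x S) M) (hx : x ∉ S) {φ : V → ℝ}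
    (hφ : ∀ y ∈ S, 0 ≤ φ y) : 0 ≤ condMean M S x φ :=
  div_nonneg (neg_nonneg.2 <| Finset.sum_nonpos fun y hy =>
    mul_nonpos_of_nonpos_of_nonneg (h.insert_offDiag_nonpos hx hy) (hφ y hy))
    (h.diag_pos (Finset.mem_insert_self x S)).le

lemma condMean_le (h : IsStieltjesOn κ L (insert x S) M) (hx : x ∉ S) {φ : V → ℝ} {a : ℝ}
    (ha : 0 ≤ a) (hφ : ∀ y ∈ S, φ y ≤ a) : condMean M S x φ ≤ a := by
  have hrow := h.rowSum_nonneg x (Finset.mem_insert_self x S)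
  rw [Finset.sum_insert hx] at hrow
  have hsum : (∑ y ∈ S, M x y) * a ≤ ∑ y ∈ S, M x y * φ y := by
    rw [Finset.sum_mul]
    exact Finset.sum_le_sum fun y hy =>
      mul_le_mul_of_nonpos_left (hφ y hy) (h.insert_offDiag_nonpos hx hy)
  rw [condMean, div_le_iff₀ (h.diag_pos (Finset.mem_insert_self x S))]
  nlinarith

lemma schur_le (h : IsStieltjesOn κ L (insert x S) M) (hx : x ∉ S) {y z : V} (hy : y ∈ S)
    (hz : z ∈ S) : schur M x y z ≤ M y z := by
  have hcorr : 0 ≤ M y x * M x z / M x x := by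
    rw [h.isSymm.apply x y]
    exact div_nonneg (mul_nonneg_of_nonpos_of_nonpos (h.insert_offDiag_nonpos hx hy)
      (h.insert_offDiag_nonpos hx hz)) (h.diag_pos (Finset.mem_insert_self x S)).le
  simpa only [schur, Matrix.of_apply, sub_le_self_iff] using hcorr

lemma schur_rowSum_nonneg (h : IsStieltjesOn κ L (insert x S) M) (hx : x ∉ S) {y : V}
    (hy : y ∈ S) : 0 ≤ ∑ z ∈ S, schur M x y z := by
  have hxx := h.diag_pos (Finset.mem_insert_self x S)
  have hrow_x := h.rowSum_nonneg x (Finset.mem_insert_self x S)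
  have hrow_y := h.rowSum_nonneg y (Finset.mem_insert_of_mem hy)
  rw [Finset.sum_insert hx] at hrow_x hrow_y
  have hyx : M y x ≤ 0 := by
    rw [h.isSymm.apply x y]
    exact h.insert_offDiag_nonpos hx hy
  calc (0 : ℝ)
      ≤ (M y x + ∑ z ∈ S, M y z) + -M y x * (M x x + ∑ z ∈ S, M x z) / M x x :=
        add_nonneg hrow_y (div_nonneg (mul_nonneg (neg_nonneg.2 hyx) hrow_x) hxx.le)
    _ = ∑ z ∈ S, M y z - M y x * (∑ z ∈ S, M x z) / M x x := by field_simp; ring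
    _ = ∑ z ∈ S, schur M x y z := by
        simp only [_root_.schur, Matrix.of_apply, Finset.sum_sub_distrib, ← Finset.sum_div,
          ← Finset.mul_sum]

/-- The coercivity constant survives because `schur M x` is the minimum of the quadratic form of
`M` over the coordinate `x`. -/
protected lemma schur (h : IsStieltjesOn κ L (insert x S) M) (hx : x ∉ S) :
    IsStieltjesOn κ L S (schur M x) where
  coercivity_pos := h.coercivity_pos
  isSymm := Matrix.IsSymm.ext fun y z => by
    simp only [_root_.schur, Matrix.of_apply, h.isSymm.apply z y, h.isSymm.apply x y,
      h.isSymm.apply x z]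
    ring
  offDiag_nonpos y hy z hz hyz := (h.schur_le hx hy hz).trans <|
    h.offDiag_nonpos y (Finset.mem_insert_of_mem hy) z (Finset.mem_insert_of_mem hz) hyz
  rowSum_nonneg _ hy := h.schur_rowSum_nonneg hx hy
  diag_le y hy := (h.schur_le hx hy hy).trans (h.diag_le y (Finset.mem_insert_of_mem hy))
  coercive φ y hy := by
    have hmin := h.coercive (Function.update φ x (condMean M S x φ)) y
      (Finset.mem_insert_of_mem hy)
    rwa [quadForm_insert h.isSymm hx (h.diag_pos (Finset.mem_insert_self x S)).ne',
      Function.update_self, Function.update_of_ne (ne_of_mem_of_not_mem hy hx),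
      update_eq_of_dependsOn (dependsOn_condMean M S x) hx,
      update_eq_of_dependsOn (dependsOn_quadForm _ S) hx,
      sub_self, zero_pow two_ne_zero, mul_zero, add_zero] at hmin

end IsStieltjesOn

/-- `H φ` is the harmonic extension to `A ∪ B` of the values of `φ` on `A`, and `M'` is the
precision matrix on `A` obtained from the precision matrix `M` on `A ∪ B` by integrating out `B`.
The identity `quadForm_add` is the Markov property: around its conditional mean `H φ`, the field on
`B` is a Gaussian field with zero boundary condition, independent of the field on `A`. -/
structure IsHarmonicExtension (M M' : Matrix V V ℝ) (A B : Finset V) (H : (V → ℝ) → V → ℝ) :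
    Prop where
  measurable : Measurable H
  dependsOn : DependsOn H A
  eq_on : ∀ φ, ∀ x ∈ A, H φ x = φ x
  nonneg : ∀ φ, (∀ x ∈ A, 0 ≤ φ x) → ∀ x, 0 ≤ H φ x
  quadForm_add : ∀ φ χ : V → ℝ, (∀ x ∈ A, χ x = 0) →
    quadForm M (A ∪ B) (H φ + χ) = quadForm M' A φ + quadForm M B χ

lemma isHarmonicExtension_empty (M : Matrix V V ℝ) (A : Finset V) :
    IsHarmonicExtension M M A ∅ (A : Set V).indicator where
  measurable := measurable_pi_iff.2 fun x => by
    by_cases hx : x ∈ A <;> simp [Set.indicator, hx, measurable_pi_apply]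
  dependsOn _ _ h := Set.indicator_congr h
  eq_on φ _ hx := Set.indicator_of_mem (Finset.mem_coe.2 hx) φ
  nonneg φ hφ := Set.indicator_nonneg hφ
  quadForm_add φ χ hχ := by
    rw [Finset.union_empty]
    have h : quadForm M A ((A : Set V).indicator φ + χ) = quadForm M A φ :=
      dependsOn_quadForm M A fun x hx => by
        rw [Pi.add_apply, Set.indicator_of_mem hx, hχ x hx, add_zero]
    have h0 : quadForm M ∅ χ = 0 := Finset.sum_empty
    rw [h, h0, add_zero]

lemma IsHarmonicExtension.insert {κ L : ℝ} {M M' : Matrix V V ℝ} {A B : Finset V} {x : V}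
    {H : (V → ℝ) → V → ℝ} (hH : IsHarmonicExtension (schur M x) M' A B H)
    (hM : IsStieltjesOn κ L (insert x (A ∪ B)) M) (hx : x ∉ A ∪ B) :
    IsHarmonicExtension M M' A (insert x B)
      fun φ => Function.update (H φ) x (condMean M (A ∪ B) x (H φ)) where
  measurable := measurable_update'.comp
    (hH.measurable.prodMk ((measurable_condMean M _ x).comp hH.measurable))
  dependsOn φ ψ h := by simp only [hH.dependsOn h]
  eq_on φ y hy := by
    have hyx : y ≠ x := ne_of_mem_of_not_mem (Finset.mem_union_left B hy) hx
    rw [Function.update_of_ne hyx, hH.eq_on φ y hy]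
  nonneg φ hφ y := by
    rcases eq_or_ne y x with rfl | hyx
    · rw [Function.update_self]
      exact hM.condMean_nonneg hx fun z _ => hH.nonneg φ hφ z
    · rw [Function.update_of_ne hyx]
      exact hH.nonneg φ hφ y
  quadForm_add φ χ hχ := by
    have hxB : x ∉ B := fun h => hx (Finset.mem_union_right A h)
    have hxx := (hM.diag_pos (Finset.mem_insert_self x _)).ne'
    set g := Function.update (H φ) x (condMean M (A ∪ B) x (H φ)) + χ with hg
    have hg_eq : ∀ y ∈ A ∪ B, g y = (H φ + χ) y := fun y hy => by
      rw [hg, Pi.add_apply, Function.update_of_ne (ne_of_mem_of_not_mem hy hx), Pi.add_apply]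
    have hgx : g x = condMean M (A ∪ B) x (H φ) + χ x := by
      rw [hg, Pi.add_apply, Function.update_self]
    have hmean_χ : condMean M (A ∪ B) x χ = condMean M B x χ :=
      condMean_eq_of_subset M Finset.subset_union_right x fun y hy hyB =>
        hχ y ((Finset.mem_union.1 hy).resolve_right hyB)
    rw [Finset.union_insert, quadForm_insert hM.isSymm hx hxx, quadForm_insert hM.isSymm hxB hxx,
      dependsOn_quadForm _ _ hg_eq, dependsOn_condMean _ _ _ hg_eq, hH.quadForm_add φ χ hχ,
      condMean_add, hgx, hmean_χ]
    ring

lemma IsStieltjesOn.exists_isHarmonicExtension {κ L : ℝ} {A B : Finset V} (hAB : Disjoint A B)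
    {M : Matrix V V ℝ} (hM : IsStieltjesOn κ L (A ∪ B) M) :
    ∃ M' H, IsStieltjesOn κ L A M' ∧ IsHarmonicExtension M M' A B H := by
  induction B using Finset.induction generalizing M with
  | empty => exact ⟨M, _, by simpa using hM, isHarmonicExtension_empty M A⟩
  | insert x B hxB ih =>
    obtain ⟨hxA, hAB⟩ := Finset.disjoint_insert_right.1 hAB
    have hx : x ∉ A ∪ B := by simp [hxA, hxB]
    rw [Finset.union_insert] at hM
    obtain ⟨M', H, hM', hH⟩ := ih hAB (hM.schur hx)
    exact ⟨M', _, hM', hH.insert hM hx⟩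

end StieltjesMatrix

section LMarginal

variable {V : Type*} [DecidableEq V]

section Product

variable {X : V → Type*} [∀ i, MeasurableSpace (X i)] {μ : ∀ i, Measure (X i)}
  {f g : (∀ i, X i) → ℝ≥0∞}

lemma lmarginal_const_of_dependsOn {S : Finset V} (hf : DependsOn f S) (φ ψ : ∀ i, X i) :
    (∫⋯∫⁻_S, f ∂μ) φ = (∫⋯∫⁻_S, f ∂μ) ψ :=
  lintegral_congr fun _ => hf fun i hi => by
    simp only [Function.updateFinset, dif_pos (Finset.mem_coe.1 hi)]

lemma lmarginal_mul_left {S : Finset V} (hf : DependsOn f (S : Set V)ᶜ) (hg : Measurable g) :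
    ∫⋯∫⁻_S, f * g ∂μ = f * ∫⋯∫⁻_S, g ∂μ := by
  ext φ
  have hf_eq (y : ∀ i : S, X i) : f (Function.updateFinset φ S y) = f φ :=
    hf fun i hi => by simp only [Function.updateFinset, dif_neg (by simpa using hi)]
  simp only [lmarginal, Pi.mul_apply, hf_eq]
  exact lintegral_const_mul _ (hg.comp measurable_updateFinset)

lemma lmarginal_union_mul [∀ i, SigmaFinite (μ i)] {A B : Finset V} (hAB : Disjoint A B)
    (hf : Measurable f) (hg : Measurable g) (hfA : DependsOn f A) (hgB : DependsOn g B)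
    (φ : ∀ i, X i) :
    (∫⋯∫⁻_A ∪ B, f * g ∂μ) φ = (∫⋯∫⁻_A, f ∂μ) φ * (∫⋯∫⁻_B, g ∂μ) φ := by
  have hfB : DependsOn f (B : Set V)ᶜ :=
    hfA.mono (Set.subset_compl_iff_disjoint_right.2 (Finset.disjoint_coe.2 hAB))
  have hconst : ∫⋯∫⁻_B, g ∂μ = fun _ => (∫⋯∫⁻_B, g ∂μ) φ :=
    funext fun ψ => lmarginal_const_of_dependsOn hgB ψ φ
  rw [lmarginal_union μ _ (hf.mul hg) hAB, lmarginal_mul_left hfB hg, hconst]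
  exact lintegral_mul_const _ (hf.comp measurable_updateFinset)

end Product

section Shear

variable {G : Type*} [AddGroup G] [MeasurableSpace G] {μ : Measure G}
  [SigmaFinite μ] [μ.IsAddLeftInvariant]

lemma lmarginal_comp_indicator_add [MeasurableAdd G] {B : Finset V} {H : (V → G) → V → G}
    (hH : DependsOn H (B : Set V)ᶜ) (f : (V → G) → ℝ≥0∞) :
    ∫⋯∫⁻_B, (fun φ => f ((B : Set V).indicator (H φ) + φ)) ∂(fun _ => μ) =
      ∫⋯∫⁻_B, f ∂(fun _ => μ) := by
  ext φ
  have hshift (y : B → G) :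
      (B : Set V).indicator (H (Function.updateFinset φ B y)) + Function.updateFinset φ B y =
        Function.updateFinset φ B (B.restrict (H φ) + y) := by
    have hH_eq : H (Function.updateFinset φ B y) = H φ :=
      hH fun i hi => by simp only [Function.updateFinset, dif_neg (by simpa using hi)]
    ext i
    by_cases hi : i ∈ B <;> simp [hH_eq, Function.updateFinset, hi]
  simp only [lmarginal, hshift]
  exact lintegral_add_left_eq_self (fun y => f (Function.updateFinset φ B y)) _

lemma lmarginal_union_comp_indicator_add [MeasurableAdd₂ G] {A B : Finset V} (hAB : Disjoint A B)
    {H : (V → G) → V → G} (hH : Measurable H) (hHA : DependsOn H A) {f : (V → G) → ℝ≥0∞}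
    (hf : Measurable f) :
    ∫⋯∫⁻_A ∪ B, (fun φ => f ((B : Set V).indicator (H φ) + φ)) ∂(fun _ => μ) =
      ∫⋯∫⁻_A ∪ B, f ∂(fun _ => μ) := by
  have hHB : DependsOn H (B : Set V)ᶜ :=
    hHA.mono (Set.subset_compl_iff_disjoint_right.2 (Finset.disjoint_coe.2 hAB))
  have hshear : Measurable fun φ => (B : Set V).indicator (H φ) + φ :=
    measurable_pi_iff.2 fun i => by
      by_cases hi : i ∈ B <;> simp only [Pi.add_apply, Set.indicator, Finset.mem_coe, hi, if_true,
        if_false] <;> fun_prop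
  rw [lmarginal_union _ _ (by exact hf.comp hshear) hAB, lmarginal_union _ _ hf hAB,
    lmarginal_comp_indicator_add hHB f]

end Shear

end LMarginal

section GaussianField

lemma lintegral_exp_neg_mul_sq_sub {α : ℝ} (hα : 0 < α) (m : ℝ) :
    ∫⁻ t, ENNReal.ofReal (exp (-α * (t - m) ^ 2)) = ENNReal.ofReal √(π / α) := by
  rw [lintegral_sub_right_eq_self fun t => ENNReal.ofReal (exp (-α * t ^ 2)), ← integral_gaussian,
    ofReal_integral_eq_lintegral_ofReal (integrable_exp_neg_mul_sq hα)
      (Filter.Eventually.of_forall fun _ => (exp_pos _).le)]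

/-- A constant `c` such that every Gaussian law with density proportional to
`exp (-α * (t - m) ^ 2)`, where `κ ≤ α ≤ L` and `m ∈ [0, a]`, gives mass at least
`c * min (1 / 2) a` to `[0, a]`. -/
noncomputable def siteConst (κ L : ℝ) : ℝ := exp (-L / 4) * √(κ / π)

lemma siteConst_pos {κ : ℝ} (hκ : 0 < κ) (L : ℝ) : 0 < siteConst κ L :=
  mul_pos (exp_pos _) (sqrt_pos.2 (div_pos hκ pi_pos))

lemma exists_Icc_subset_Icc_near {a m : ℝ} (hm : m ∈ Set.Icc 0 a) :
    ∃ l u, Set.Icc l u ⊆ Set.Icc 0 a ∧ u - l = min (1 / 2) a ∧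
      ∀ t ∈ Set.Icc l u, (t - m) ^ 2 ≤ 1 / 4 := by
  obtain ⟨hm0, hma⟩ := hm
  have hδ := min_le_left (1 / 2) a
  have hδa := min_le_right (1 / 2) a
  have hδ0 : 0 ≤ min (1 / 2) a := le_min (by norm_num) (hm0.trans hma)
  rcases le_total (m + min (1 / 2) a) a with h | h
  · refine ⟨m, m + min (1 / 2) a, Set.Icc_subset_Icc hm0 h, by ring, fun t ht => ?_⟩
    nlinarith [ht.1, ht.2]
  · refine ⟨a - min (1 / 2) a, a, Set.Icc_subset_Icc (by linarith) le_rfl, by ring, fun t ht => ?_⟩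
    nlinarith [ht.1, ht.2]

lemma le_setLIntegral_exp_neg_mul_sq_sub {κ L α a m : ℝ} (hα : 0 < α) (hκα : κ ≤ α) (hαL : α ≤ L)
    (hm : m ∈ Set.Icc 0 a) :
    ENNReal.ofReal (siteConst κ L * min (1 / 2) a) * ENNReal.ofReal √(π / α) ≤
      ∫⁻ t in Set.Icc 0 a, ENNReal.ofReal (exp (-α * (t - m) ^ 2)) := by
  obtain ⟨l, u, hsub, hlen, hnear⟩ := exists_Icc_subset_Icc_near hm
  have hδ0 : 0 ≤ min (1 / 2) a := le_min (by norm_num) (hm.1.trans hm.2)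
  have hsqrt : √(κ / π) * √(π / α) ≤ 1 := by
    rw [← sqrt_mul' _ (by positivity), div_mul_div_cancel₀ pi_ne_zero]
    exact sqrt_le_one.2 ((div_le_one hα).2 hκα)
  have hreal : siteConst κ L * min (1 / 2) a * √(π / α) ≤ exp (-L / 4) * (u - l) := by
    rw [hlen, siteConst]
    calc exp (-L / 4) * √(κ / π) * min (1 / 2) a * √(π / α)
        = exp (-L / 4) * min (1 / 2) a * (√(κ / π) * √(π / α)) := by ring
      _ ≤ exp (-L / 4) * min (1 / 2) a := mul_le_of_le_one_right (by positivity) hsqrt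
  have hdensity : ∀ t ∈ Set.Icc l u,
      ENNReal.ofReal (exp (-L / 4)) ≤ ENNReal.ofReal (exp (-α * (t - m) ^ 2)) := fun t ht =>
    ENNReal.ofReal_le_ofReal <| exp_le_exp.2 <| by nlinarith [hnear t ht, sq_nonneg (t - m)]
  calc ENNReal.ofReal (siteConst κ L * min (1 / 2) a) * ENNReal.ofReal √(π / α)
      ≤ ENNReal.ofReal (exp (-L / 4)) * volume (Set.Icc l u) := by
        rw [Real.volume_Icc, ← ENNReal.ofReal_mul' (sqrt_nonneg _),
          ← ENNReal.ofReal_mul (exp_pos _).le]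
        exact ENNReal.ofReal_le_ofReal hreal
    _ = ∫⁻ _ in Set.Icc l u, ENNReal.ofReal (exp (-L / 4)) := (setLIntegral_const _ _).symm
    _ ≤ ∫⁻ t in Set.Icc l u, ENNReal.ofReal (exp (-α * (t - m) ^ 2)) :=
        setLIntegral_mono' measurableSet_Icc hdensity
    _ ≤ ∫⁻ t in Set.Icc 0 a, ENNReal.ofReal (exp (-α * (t - m) ^ 2)) :=
        lintegral_mono_set hsub

variable {V : Type*}

/-- The unnormalised density of the centred Gaussian field on `S` with precision matrix `M`. -/
noncomputable def gaussWeight (M : Matrix V V ℝ) (S : Finset V) (φ : V → ℝ) : ℝ≥0∞ :=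
  ENNReal.ofReal (exp (-quadForm M S φ))

lemma measurable_gaussWeight (M : Matrix V V ℝ) (S : Finset V) : Measurable (gaussWeight M S) :=
  (measurable_quadForm M S).neg.exp.ennreal_ofReal

lemma dependsOn_gaussWeight (M : Matrix V V ℝ) (S : Finset V) : DependsOn (gaussWeight M S) S :=
  fun _ _ h => by rw [gaussWeight, gaussWeight, dependsOn_quadForm M S h]

lemma dependsOn_indicator {S : Finset V} {E : Set (V → ℝ)} {f : (V → ℝ) → ℝ≥0∞}
    (hE : DependsOn (· ∈ E) S) (hf : DependsOn f S) : DependsOn (E.indicator f) S :=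
  fun φ ψ h => by
    classical
    simp only [Set.indicator_apply, hf h, hE h]

lemma dependsOn_mem_pi (S : Finset V) (s : Set ℝ) :
    DependsOn (· ∈ (S : Set V).pi fun _ => s) S := fun φ ψ h => propext <| by
  simp only [Set.mem_pi]
  exact forall₂_congr fun x hx => by rw [h x hx]

lemma measurableSet_finset_pi (S : Finset V) {s : Set ℝ} (hs : MeasurableSet s) :
    MeasurableSet ((S : Set V).pi fun _ => s) :=
  MeasurableSet.pi S.countable_toSet fun _ _ => hs

variable [DecidableEq V]

lemma gaussWeight_insert {M : Matrix V V ℝ} (hM : M.IsSymm) {S : Finset V} {x : V} (hx : x ∉ S)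
    (hxx : M x x ≠ 0) (φ : V → ℝ) :
    gaussWeight M (insert x S) φ = gaussWeight (schur M x) S φ *
      ENNReal.ofReal (exp (-M x x * (φ x - condMean M S x φ) ^ 2)) := by
  rw [gaussWeight, gaussWeight, quadForm_insert hM hx hxx, ← ENNReal.ofReal_mul (exp_pos _).le,
    ← exp_add]
  ring_nf

/-- Integrating out the coordinate `x`, which is Gaussian with mean `condMean M S x φ` given the
others. -/
lemma lmarginal_insert_gaussWeight {M : Matrix V V ℝ} (hM : M.IsSymm) {S : Finset V} {x : V}
    (hx : x ∉ S) (hxx : M x x ≠ 0) {s : Set ℝ} (hs : MeasurableSet s) :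
    (∫⋯∫⁻_insert x S, (((insert x S : Finset V) : Set V).pi fun _ => s).indicator
        (gaussWeight M (insert x S))) =
      ∫⋯∫⁻_S, ((S : Set V).pi fun _ => s).indicator fun φ => gaussWeight (schur M x) S φ *
        ∫⁻ t in s, ENNReal.ofReal (exp (-M x x * (t - condMean M S x φ) ^ 2)) := by
  classical
  rw [lmarginal_insert' _
    ((measurable_gaussWeight _ _).indicator (measurableSet_finset_pi _ hs)) hx]
  refine congrArg (lmarginal (fun _ => volume) S) (funext fun φ => ?_)
  have hmem (t : ℝ) : Function.update φ x t ∈ ((insert x S : Finset V) : Set V).pi (fun _ => s) ↔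
      t ∈ s ∧ φ ∈ (S : Set V).pi fun _ => s := by
    rw [Finset.coe_insert, Set.insert_pi, Set.mem_inter_iff, Set.mem_preimage,
      Function.eval, Function.update_self,
      iff_of_eq (update_eq_of_dependsOn (dependsOn_mem_pi S s) hx φ t)]
  have hweight (t : ℝ) : gaussWeight M (insert x S) (Function.update φ x t) =
      gaussWeight (schur M x) S φ *
        ENNReal.ofReal (exp (-M x x * (t - condMean M S x φ) ^ 2)) := by
    rw [gaussWeight_insert hM hx hxx, update_eq_of_dependsOn (dependsOn_gaussWeight _ S) hx,
      update_eq_of_dependsOn (dependsOn_condMean M S x) hx, Function.update_self]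
  by_cases hφ : φ ∈ (S : Set V).pi fun _ => s
  · rw [Set.indicator_of_mem hφ, ← lintegral_const_mul _ (by fun_prop), ← lintegral_indicator hs]
    simp only [Set.indicator_apply, hmem, hφ, and_true, hweight]
  · simp only [Set.indicator_apply, hmem, hφ, and_false, if_false, lintegral_zero]

lemma lmarginal_insert_gaussWeight_univ {M : Matrix V V ℝ} (hM : M.IsSymm) {S : Finset V} {x : V}
    (hx : x ∉ S) (hxx : 0 < M x x) (φ : V → ℝ) :
    (∫⋯∫⁻_insert x S, gaussWeight M (insert x S)) φ =
      (∫⋯∫⁻_S, gaussWeight (schur M x) S) φ * ENNReal.ofReal √(π / M x x) := by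
  have h := lmarginal_insert_gaussWeight hM hx hxx.ne' MeasurableSet.univ
  simp only [Set.pi_univ, Set.indicator_univ, setLIntegral_univ,
    lintegral_exp_neg_mul_sq_sub hxx] at h
  rw [h]
  exact lintegral_mul_const _ ((measurable_gaussWeight _ _).comp measurable_updateFinset)

variable {κ L : ℝ}

lemma lmarginal_gaussWeight_ne_top {S : Finset V} {M : Matrix V V ℝ} (hM : IsStieltjesOn κ L S M)
    (φ : V → ℝ) : (∫⋯∫⁻_S, gaussWeight M S) φ ≠ ⊤ := by
  induction S using Finset.induction generalizing M with
  | empty => simp [gaussWeight]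
  | insert x S hx ih =>
    rw [lmarginal_insert_gaussWeight_univ hM.isSymm hx (hM.diag_pos (Finset.mem_insert_self x S))]
    exact ENNReal.mul_ne_top (ih (hM.schur hx)) ENNReal.ofReal_ne_top

lemma pow_card_mul_lmarginal_gaussWeight_le {S : Finset V} {M : Matrix V V ℝ}
    (hM : IsStieltjesOn κ L S M) {a : ℝ} (ha : 0 ≤ a) (φ : V → ℝ) :
    ENNReal.ofReal (siteConst κ L * min (1 / 2) a) ^ S.card * (∫⋯∫⁻_S, gaussWeight M S) φ ≤
      (∫⋯∫⁻_S, ((S : Set V).pi fun _ => Set.Icc 0 a).indicator (gaussWeight M S)) φ := by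
  induction S using Finset.induction generalizing M with
  | empty => simp
  | insert x S hx ih =>
    have hmem := Finset.mem_insert_self x S
    have hxx := hM.diag_pos hmem
    set p := ENNReal.ofReal (siteConst κ L * min (1 / 2) a)
    set r := ENNReal.ofReal √(π / M x x)
    set K := (S : Set V).pi fun _ => Set.Icc 0 a
    have hK : Measurable (K.indicator (gaussWeight (schur M x) S)) :=
      (measurable_gaussWeight _ _).indicator (measurableSet_finset_pi S measurableSet_Icc)
    have hsite : (fun ψ => K.indicator (gaussWeight (schur M x) S) ψ * (p * r)) ≤
        K.indicator fun ψ => gaussWeight (schur M x) S ψ *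
          ∫⁻ t in Set.Icc 0 a, ENNReal.ofReal (exp (-M x x * (t - condMean M S x ψ) ^ 2)) := by
      intro ψ
      by_cases hψ : ψ ∈ K
      · have hmean : condMean M S x ψ ∈ Set.Icc 0 a :=
          ⟨hM.condMean_nonneg hx fun y hy => (hψ y hy).1,
            hM.condMean_le hx ha fun y hy => (hψ y hy).2⟩
        simp only [Set.indicator_of_mem hψ]
        gcongr
        exact le_setLIntegral_exp_neg_mul_sq_sub hxx (hM.le_diag hmem) (hM.diag_le x hmem) hmean
      · simp only [Set.indicator_of_notMem hψ, zero_mul, le_refl]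
    calc p ^ (insert x S).card * (∫⋯∫⁻_insert x S, gaussWeight M (insert x S)) φ
        = p ^ S.card * (∫⋯∫⁻_S, gaussWeight (schur M x) S) φ * (p * r) := by
          rw [Finset.card_insert_of_notMem hx, lmarginal_insert_gaussWeight_univ hM.isSymm hx hxx]
          ring
      _ ≤ (∫⋯∫⁻_S, K.indicator (gaussWeight (schur M x) S)) φ * (p * r) := by
          gcongr
          exact ih (hM.schur hx)
      _ = (∫⋯∫⁻_S, fun ψ => K.indicator (gaussWeight (schur M x) S) ψ * (p * r)) φ :=
          (lintegral_mul_const _ (hK.comp measurable_updateFinset)).symm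
      _ ≤ (∫⋯∫⁻_insert x S, (((insert x S : Finset V) : Set V).pi fun _ => Set.Icc 0 a).indicator
            (gaussWeight M (insert x S))) φ := by
          rw [lmarginal_insert_gaussWeight hM.isSymm hx hxx.ne' measurableSet_Icc]
          exact lmarginal_mono hsite φ

lemma IsHarmonicExtension.gaussWeight_indicator_add {M M' : Matrix V V ℝ} {A B : Finset V}
    {H : (V → ℝ) → V → ℝ} (hH : IsHarmonicExtension M M' A B H) (hAB : Disjoint A B)
    (φ : V → ℝ) :
    gaussWeight M (A ∪ B) ((B : Set V).indicator (H φ) + φ) =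
      gaussWeight M' A φ * gaussWeight M B φ := by
  have hχ : ∀ x ∈ A, (B : Set V).indicator φ x = 0 := fun x hx =>
    Set.indicator_of_notMem (Finset.disjoint_left.1 hAB hx) φ
  have hshift : ∀ x ∈ A ∪ B,
      ((B : Set V).indicator (H φ) + φ) x = (H φ + (B : Set V).indicator φ) x := fun x hx => by
    rcases Finset.mem_union.1 hx with hxA | hxB
    · have hxB : x ∉ (B : Set V) := Finset.disjoint_left.1 hAB hxA
      simp [hxB, hH.eq_on φ x hxA]
    · simp [Finset.mem_coe.2 hxB]
  rw [dependsOn_gaussWeight M (A ∪ B) hshift, gaussWeight, hH.quadForm_add φ _ hχ, neg_add,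
    exp_add, ENNReal.ofReal_mul (exp_pos _).le, ← gaussWeight, ← gaussWeight,
    dependsOn_gaussWeight M B fun x hx => Set.indicator_of_mem hx φ]

lemma IsHarmonicExtension.lmarginal_union_gaussWeight {M M' : Matrix V V ℝ} {A B : Finset V}
    {H : (V → ℝ) → V → ℝ} (hH : IsHarmonicExtension M M' A B H) (hAB : Disjoint A B)
    (φ : V → ℝ) :
    (∫⋯∫⁻_A ∪ B, gaussWeight M (A ∪ B)) φ =
      (∫⋯∫⁻_A, gaussWeight M' A) φ * (∫⋯∫⁻_B, gaussWeight M B) φ := by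
  rw [← lmarginal_union_comp_indicator_add hAB hH.measurable hH.dependsOn
    (measurable_gaussWeight M (A ∪ B)),
    funext (hH.gaussWeight_indicator_add hAB)]
  exact lmarginal_union_mul hAB (measurable_gaussWeight M' A) (measurable_gaussWeight M B)
    (dependsOn_gaussWeight M' A) (dependsOn_gaussWeight M B) φ

/-- The harmonic extension of a nonnegative field is nonnegative, so translating the zero-boundary
field on `B` by it preserves the increasing event `E`. -/
lemma IsHarmonicExtension.mul_lmarginal_le {M M' : Matrix V V ℝ} {A B : Finset V}
    {H : (V → ℝ) → V → ℝ} (hH : IsHarmonicExtension M M' A B H) (hAB : Disjoint A B)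
    {s : Set ℝ} (hs : MeasurableSet s) (hs_nonneg : ∀ t ∈ s, 0 ≤ t) {E : Set (V → ℝ)}
    (hE : MeasurableSet E) (hE_upper : IsUpperSet E) (hEB : DependsOn (· ∈ E) B) (φ : V → ℝ) :
    (∫⋯∫⁻_A, ((A : Set V).pi fun _ => s).indicator (gaussWeight M' A)) φ *
        (∫⋯∫⁻_B, E.indicator (gaussWeight M B)) φ ≤
      (∫⋯∫⁻_A ∪ B, (E ∩ (A : Set V).pi fun _ => s).indicator (gaussWeight M (A ∪ B))) φ := by
  set K := (A : Set V).pi fun _ => s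
  have hK : MeasurableSet K := measurableSet_finset_pi A hs
  have hshift_mem : ∀ ψ ∈ E ∩ K, (B : Set V).indicator (H ψ) + ψ ∈ E ∩ K := by
    rintro ψ ⟨hψE, hψK⟩
    have hHψ := hH.nonneg ψ fun x hx => hs_nonneg _ (hψK x hx)
    refine ⟨hE_upper (le_add_of_nonneg_left (Set.indicator_nonneg fun x _ => hHψ x)) hψE,
      fun x hx => ?_⟩
    rw [Pi.add_apply, Set.indicator_of_notMem (Finset.disjoint_left.1 hAB hx), zero_add]
    exact hψK x hx
  have hshift : K.indicator (gaussWeight M' A) * E.indicator (gaussWeight M B) ≤ fun ψ =>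
      (E ∩ K).indicator (gaussWeight M (A ∪ B)) ((B : Set V).indicator (H ψ) + ψ) := by
    intro ψ
    rw [Pi.mul_apply, ← Set.inter_indicator_mul, Set.inter_comm]
    refine Set.indicator_apply_le' (fun hψ => ?_) fun _ => zero_le
    beta_reduce
    rw [Set.indicator_of_mem (hshift_mem ψ hψ), hH.gaussWeight_indicator_add hAB]
  rw [← lmarginal_union_mul hAB ((measurable_gaussWeight M' A).indicator hK)
      ((measurable_gaussWeight M B).indicator hE)
      (dependsOn_indicator (dependsOn_mem_pi A s) (dependsOn_gaussWeight M' A))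
      (dependsOn_indicator hEB (dependsOn_gaussWeight M B)),
    ← lmarginal_union_comp_indicator_add hAB hH.measurable hH.dependsOn
      ((measurable_gaussWeight M (A ∪ B)).indicator (hE.inter hK))]
  exact lmarginal_mono hshift φ

lemma IsStieltjesOn.pow_card_mul_lmarginal_le {A B : Finset V} (hAB : Disjoint A B)
    {M : Matrix V V ℝ} (hM : IsStieltjesOn κ L (A ∪ B) M) {a : ℝ} (ha : 0 ≤ a) {E : Set (V → ℝ)}
    (hE : MeasurableSet E) (hE_upper : IsUpperSet E) (hEB : DependsOn (· ∈ E) B) (φ : V → ℝ) :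
    ENNReal.ofReal (siteConst κ L * min (1 / 2) a) ^ A.card *
        (∫⋯∫⁻_B, E.indicator (gaussWeight M B)) φ * (∫⋯∫⁻_A ∪ B, gaussWeight M (A ∪ B)) φ ≤
      (∫⋯∫⁻_A ∪ B, (E ∩ (A : Set V).pi fun _ => Set.Icc 0 a).indicator
        (gaussWeight M (A ∪ B))) φ * (∫⋯∫⁻_B, gaussWeight M B) φ := by
  obtain ⟨M', H, hM', hH⟩ := hM.exists_isHarmonicExtension hAB
  set p := ENNReal.ofReal (siteConst κ L * min (1 / 2) a)
  set ZB := (∫⋯∫⁻_B, gaussWeight M B) φ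
  set IE := (∫⋯∫⁻_B, E.indicator (gaussWeight M B)) φ
  calc p ^ A.card * IE * (∫⋯∫⁻_A ∪ B, gaussWeight M (A ∪ B)) φ
      = p ^ A.card * (∫⋯∫⁻_A, gaussWeight M' A) φ * IE * ZB := by
        rw [hH.lmarginal_union_gaussWeight hAB]
        ring
    _ ≤ (∫⋯∫⁻_A, ((A : Set V).pi fun _ => Set.Icc 0 a).indicator (gaussWeight M' A)) φ * IE *
          ZB := by
        gcongr
        exact pow_card_mul_lmarginal_gaussWeight_le hM' ha φ
    _ ≤ _ := by
        gcongr
        exact hH.mul_lmarginal_le hAB measurableSet_Icc (fun _ ht => ht.1) hE hE_upper hEB φ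

end GaussianField

section PolyaFlow

lemma sum_add_single_eq_sum {ι : Type*} [DecidableEq ι] {P : Finset (ι → ℕ)}
    (hP : IsLowerSet (P : Set (ι → ℕ))) (l : ι) {f : (ι → ℕ) → ℝ} (hfP : ∀ w ∉ P, f w = 0)
    (hfl : ∀ w, w l = 0 → f w = 0) : ∑ v ∈ P, f (v + Pi.single l 1) = ∑ v ∈ P, f v := by
  have hrange : Function.support f ⊆ Set.range fun v => v + Pi.single l 1 := fun w hw => by
    have hwl : 1 ≤ w l := Nat.one_le_iff_ne_zero.2 fun h => hw (hfl w h)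
    exact ⟨w - Pi.single l 1,
      tsub_add_cancel_of_le (update_le_iff.2 ⟨hwl, fun _ _ => Nat.zero_le _⟩)⟩
  have hshift : ∀ v ∉ P, f (v + Pi.single l 1) = 0 := fun v hv =>
    hfP _ fun h => hv (hP le_self_add h)
  calc ∑ v ∈ P, f (v + Pi.single l 1)
      = ∑' v, f (v + Pi.single l 1) := (tsum_eq_sum hshift).symm
    _ = ∑' v, f v := (add_left_injective (Pi.single l 1 : ι → ℕ)).tsum_eq hrange
    _ = ∑ v ∈ P, f v := tsum_eq_sum hfP

lemma card_piAntidiag_eq_choose {ι : Type*} [DecidableEq ι] (s : Finset ι) (n : ℕ) :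
    (s.piAntidiag n).card = (s.card + n - 1).choose n := by
  rw [← Finset.card_finsuppAntidiag_nat_eq_choose (s := s) n, Finset.finsuppAntidiag,
    Finset.card_map, Finset.card_attach]

/-- Pólya's unit flow from the origin of the octant `ℕ³` to infinity: the amount flowing through
the edge from `w - Pi.single l 1` to `w`. It vanishes if `w l = 0`, when there is no such edge. -/
noncomputable def polyaFlow (l : Fin 3) (w : Fin 3 → ℕ) : ℝ :=
  2 * w l / ((∑ i, w i) * (∑ i, w i + 1) * (∑ i, w i + 2) : ℕ)

lemma polyaFlow_add_single (l : Fin 3) (v : Fin 3 → ℕ) :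
    polyaFlow l (v + Pi.single l 1) =
      2 * (v l + 1) / ((∑ i, v i + 1) * (∑ i, v i + 2) * (∑ i, v i + 3) : ℕ) := by
  simp [polyaFlow, Finset.sum_add_distrib, add_assoc]

lemma sum_polyaFlow_add_single (v : Fin 3 → ℕ) :
    ∑ l, polyaFlow l (v + Pi.single l 1) =
      2 / ((∑ i, v i + 1) * (∑ i, v i + 2) : ℕ) := by
  simp only [polyaFlow_add_single, ← Finset.sum_div, ← Finset.mul_sum, Finset.sum_add_distrib]
  push_cast
  simp only [Finset.sum_const, Finset.card_univ, Fintype.card_fin, nsmul_eq_mul]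
  field_simp
  norm_num

lemma sum_polyaFlow {v : Fin 3 → ℕ} (hv : v ≠ 0) :
    ∑ l, polyaFlow l v = 2 / ((∑ i, v i + 1) * (∑ i, v i + 2) : ℕ) := by
  have hn : (∑ i, (v i : ℝ)) ≠ 0 := by
    simpa [← Nat.cast_sum, funext_iff] using hv
  simp only [polyaFlow, ← Finset.sum_div, ← Finset.mul_sum]
  push_cast
  field_simp

lemma sum_polyaFlow_add_single_sub (v : Fin 3 → ℕ) :
    ∑ l, (polyaFlow l (v + Pi.single l 1) - polyaFlow l v) = if v = 0 then 1 else 0 := by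
  rw [Finset.sum_sub_distrib, sum_polyaFlow_add_single]
  split_ifs with hv
  · simp [hv, polyaFlow]
  · rw [sum_polyaFlow hv, sub_self]

lemma sum_sq_polyaFlow_add_single_le (v : Fin 3 → ℕ) :
    ∑ l, polyaFlow l (v + Pi.single l 1) ^ 2 ≤
      4 / ((∑ i, v i + 1) * (∑ i, v i + 2) : ℕ) ^ 2 := by
  calc ∑ l, polyaFlow l (v + Pi.single l 1) ^ 2
      ≤ (∑ l, polyaFlow l (v + Pi.single l 1)) ^ 2 :=
        Finset.sum_sq_le_sq_sum_of_nonneg fun l _ => by rw [polyaFlow]; positivity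
    _ = _ := by rw [sum_polyaFlow_add_single, div_pow]; norm_num

lemma sum_piAntidiag_sq_polyaFlow_le (n : ℕ) :
    ∑ v ∈ (univ : Finset (Fin 3)).piAntidiag n, ∑ l, polyaFlow l (v + Pi.single l 1) ^ 2 ≤
      2 / ((n : ℝ) + 1) - 2 / ((n + 1 : ℕ) + 1) := by
  have hcard : (((univ : Finset (Fin 3)).piAntidiag n).card : ℝ) = (n + 2) * (n + 1) / 2 := by
    rw [card_piAntidiag_eq_choose, Finset.card_univ, Fintype.card_fin,
      show 3 + n - 1 = n + 2 by omega, Nat.choose_symm_add, Nat.cast_choose_two]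
    push_cast
    ring
  calc ∑ v ∈ (univ : Finset (Fin 3)).piAntidiag n, ∑ l, polyaFlow l (v + Pi.single l 1) ^ 2
      ≤ ∑ v ∈ (univ : Finset (Fin 3)).piAntidiag n, (4 / ((n + 1) * (n + 2) : ℕ) ^ 2 : ℝ) :=
        Finset.sum_le_sum fun v hv => by
          rw [← (Finset.mem_piAntidiag.1 hv).1]
          exact sum_sq_polyaFlow_add_single_le v
    _ = 2 / ((n : ℝ) + 1) - 2 / ((n + 1 : ℕ) + 1) := by
        rw [Finset.sum_const, nsmul_eq_mul, hcard]
        push_cast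
        field_simp
        ring

lemma sum_sq_polyaFlow_le (P : Finset (Fin 3 → ℕ)) :
    ∑ v ∈ P, ∑ l, polyaFlow l (v + Pi.single l 1) ^ 2 ≤ 2 := by
  obtain ⟨R, hR⟩ := (P.image fun v => ∑ i, v i).bddAbove
  set Q := (range (R + 1)).biUnion fun n => (univ : Finset (Fin 3)).piAntidiag n
  have hPQ : P ⊆ Q := fun v hv => Finset.mem_biUnion.2 ⟨∑ i, v i,
    Finset.mem_range.2 (Nat.lt_succ_of_le (hR (Finset.mem_image_of_mem _ hv))),
    Finset.mem_piAntidiag.2 ⟨rfl, fun i _ => Finset.mem_univ i⟩⟩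
  calc ∑ v ∈ P, ∑ l, polyaFlow l (v + Pi.single l 1) ^ 2
      ≤ ∑ v ∈ Q, ∑ l, polyaFlow l (v + Pi.single l 1) ^ 2 :=
        Finset.sum_le_sum_of_subset_of_nonneg hPQ fun _ _ _ => by positivity
    _ ≤ ∑ n ∈ range (R + 1), (2 / ((n : ℝ) + 1) - 2 / ((n + 1 : ℕ) + 1)) := by
        rw [Finset.sum_biUnion fun m _ n _ hmn => Finset.disjoint_left.2 fun v hm hn =>
          hmn ((Finset.mem_piAntidiag.1 hm).1.symm.trans (Finset.mem_piAntidiag.1 hn).1)]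
        exact Finset.sum_le_sum fun n _ => sum_piAntidiag_sq_polyaFlow_le n
    _ ≤ 2 := by
        rw [Finset.sum_range_sub' fun n : ℕ => 2 / ((n : ℝ) + 1)]
        simp only [Nat.cast_zero, zero_add, div_one, sub_le_self_iff]
        positivity

/-- Transience of the octant `ℕ³`: test `g` against Pólya's flow, sum by parts and use the
Cauchy–Schwarz inequality. -/
lemma sq_apply_zero_le_two_mul_sum_sq {P : Finset (Fin 3 → ℕ)}
    (hP : IsLowerSet (P : Set (Fin 3 → ℕ))) {g : (Fin 3 → ℕ) → ℝ} (hg : ∀ v ∉ P, g v = 0) :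
    g 0 ^ 2 ≤ 2 * ∑ v ∈ P, ∑ l, (g v - g (v + Pi.single l 1)) ^ 2 := by
  have hparts (l : Fin 3) : ∑ v ∈ P, polyaFlow l (v + Pi.single l 1) * g (v + Pi.single l 1) =
      ∑ v ∈ P, polyaFlow l v * g v :=
    sum_add_single_eq_sum hP l (f := polyaFlow l * g) (fun w hw => by simp [hg w hw])
      fun w hw => by simp [polyaFlow, hw]
  have hflow : ∑ v ∈ P, ∑ l, polyaFlow l (v + Pi.single l 1) * (g v - g (v + Pi.single l 1)) =
      g 0 := by
    calc ∑ v ∈ P, ∑ l, polyaFlow l (v + Pi.single l 1) * (g v - g (v + Pi.single l 1))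
        = ∑ v ∈ P, g v * ∑ l, (polyaFlow l (v + Pi.single l 1) - polyaFlow l v) := by
          rw [Finset.sum_comm]
          simp only [mul_sub, Finset.sum_sub_distrib, hparts, Finset.mul_sum]
          congr 1 <;> rw [Finset.sum_comm] <;>
            exact Finset.sum_congr rfl fun _ _ => Finset.sum_congr rfl fun _ _ => mul_comm _ _
      _ = g 0 := by
          simp only [sum_polyaFlow_add_single_sub, mul_ite, mul_one, mul_zero, Finset.sum_ite_eq']
          split_ifs with h
          · rfl
          · exact (hg 0 h).symm
  calc g 0 ^ 2
      ≤ (∑ v ∈ P, ∑ l, polyaFlow l (v + Pi.single l 1) ^ 2) *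
          ∑ v ∈ P, ∑ l, (g v - g (v + Pi.single l 1)) ^ 2 := by
        rw [← hflow]
        simp only [← Finset.sum_product']
        exact Finset.sum_mul_sq_le_sq_mul_sq _ _ _
    _ ≤ 2 * ∑ v ∈ P, ∑ l, (g v - g (v + Pi.single l 1)) ^ 2 := by
        gcongr
        exact sum_sq_polyaFlow_le P

end PolyaFlow

section Lattice

variable {d : ℕ}

lemma mem_nbrs_iff {x y : Fin d → ℤ} :
    y ∈ nbrs d x ↔ ∃ i, ∃ s : Bool, Function.update x i (x i + if s then 1 else -1) = y := by
  simp only [nbrs, Finset.mem_image, Finset.mem_univ, true_and, Prod.exists]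

lemma mem_nbrs_symm {x y : Fin d → ℤ} (h : y ∈ nbrs d x) : x ∈ nbrs d y := by
  obtain ⟨i, s, rfl⟩ := mem_nbrs_iff.1 h
  exact mem_nbrs_iff.2 ⟨i, !s, by cases s <;> simp⟩

lemma mem_nbrs_comm {x y : Fin d → ℤ} : y ∈ nbrs d x ↔ x ∈ nbrs d y :=
  ⟨mem_nbrs_symm, mem_nbrs_symm⟩

lemma card_nbrs_le (x : Fin d → ℤ) : (nbrs d x).card ≤ 2 * d := by
  calc (nbrs d x).card
      ≤ (univ : Finset (Fin d × Bool)).card := Finset.card_image_le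
    _ = 2 * d := by simp [mul_comm]

lemma nbrs_subset_union_bdry {A : Finset (Fin d → ℤ)} {x : Fin d → ℤ} (hx : x ∈ A) :
    nbrs d x ⊆ A ∪ bdry d A := by
  rw [bdry, Finset.union_sdiff_self_eq_union]
  exact (Finset.subset_biUnion_of_mem (nbrs d) hx).trans Finset.subset_union_right

lemma mem_union_bdry_of_sub_ne_zero {A : Finset (Fin d → ℤ)} {f : (Fin d → ℤ) → ℝ}
    (hf : ∀ x ∉ A, f x = 0) {x y : Fin d → ℤ} (hxy : y ∈ nbrs d x) (h : f x - f y ≠ 0) :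
    x ∈ A ∪ bdry d A ∧ y ∈ A ∪ bdry d A := by
  by_cases hx : x ∈ A
  · exact ⟨Finset.mem_union_left _ hx, nbrs_subset_union_bdry hx hxy⟩
  · have hy : y ∈ A := by
      by_contra hy
      exact h (by rw [hf x hx, hf y hy, sub_zero])
    exact ⟨nbrs_subset_union_bdry hy (mem_nbrs_symm hxy), Finset.mem_union_left _ hy⟩

section OctantEmb

/-- The embedding of the octant `ℕ³` in `ℤ^d` along the first three coordinates, with its corner at
`x`. -/
noncomputable def octantEmb (hd : 3 ≤ d) (x : Fin d → ℤ) (v : Fin 3 → ℕ) : Fin d → ℤ :=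
  x + Function.extend (Fin.castLE hd) (fun i => (v i : ℤ)) 0

variable (hd : 3 ≤ d) (x : Fin d → ℤ)

lemma octantEmb_castLE (v : Fin 3 → ℕ) (i : Fin 3) :
    octantEmb hd x v (Fin.castLE hd i) = x (Fin.castLE hd i) + v i := by
  rw [octantEmb, Pi.add_apply, (Fin.castLE_injective hd).extend_apply]

lemma octantEmb_zero : octantEmb hd x 0 = x := by
  ext j
  simp [octantEmb, Function.extend_def]

lemma octantEmb_injective : Function.Injective (octantEmb hd x) := fun v w h => by
  ext i
  simpa [octantEmb_castLE] using congrFun h (Fin.castLE hd i)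

lemma octantEmb_add_single_mem_nbrs (v : Fin 3 → ℕ) (l : Fin 3) :
    octantEmb hd x (v + Pi.single l 1) ∈ nbrs d (octantEmb hd x v) := by
  refine mem_nbrs_iff.2 ⟨Fin.castLE hd l, true, ?_⟩
  ext j
  by_cases hj : ∃ i, Fin.castLE hd i = j
  · obtain ⟨i, rfl⟩ := hj
    rcases eq_or_ne i l with rfl | hil
    · simp [octantEmb_castLE, add_assoc]
    · simp [octantEmb_castLE, (Fin.castLE_injective hd).ne hil, hil]
  · have hne : j ≠ Fin.castLE hd l := fun h => hj ⟨l, h.symm⟩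
    rw [Function.update_of_ne hne, octantEmb, octantEmb, Pi.add_apply, Pi.add_apply,
      Function.extend_apply' _ _ _ hj, Function.extend_apply' _ _ _ hj]

lemma octantEmb_edge_injective : Function.Injective fun p : (Fin 3 → ℕ) × Fin 3 =>
    (octantEmb hd x p.1, octantEmb hd x (p.1 + Pi.single p.2 1)) := by
  rintro ⟨v, l⟩ ⟨w, m⟩ h
  obtain ⟨hvw, hlm⟩ := Prod.ext_iff.1 h
  obtain rfl : v = w := octantEmb_injective hd x hvw
  have hsingle := congrFun (add_left_cancel (octantEmb_injective hd x hlm)) l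
  obtain rfl : l = m := by
    by_contra hne
    simp [hne] at hsingle
  rfl

end OctantEmb

/-- Transience of `ℤ^d` for `d ≥ 3`: the Green function of the free field is bounded uniformly in
the domain. -/
lemma sq_apply_le_mul_ham (hd : 3 ≤ d) {A : Finset (Fin d → ℤ)} {f : (Fin d → ℤ) → ℝ}
    (hf : ∀ y ∉ A, f y = 0) (x : Fin d → ℤ) :
    f x ^ 2 ≤ 16 * d * ham d A f := by
  set g : (Fin 3 → ℕ) → ℝ := fun v => f (octantEmb hd x v)
  set F : (Fin d → ℤ) × (Fin d → ℤ) → ℝ := fun p =>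
    if p.2 ∈ nbrs d p.1 then (f p.1 - f p.2) ^ 2 else 0
  set edge : (Fin 3 → ℕ) × Fin 3 → (Fin d → ℤ) × (Fin d → ℤ) := fun p =>
    (octantEmb hd x p.1, octantEmb hd x (p.1 + Pi.single p.2 1))
  set T := (A ∪ bdry d A) ×ˢ (A ∪ bdry d A)
  have hF_zero : ∀ p ∉ T, F p = 0 := by
    rintro ⟨y, z⟩ hp
    by_contra hne
    obtain ⟨hyz, hsub⟩ : z ∈ nbrs d y ∧ f y - f z ≠ 0 := by simpa [F] using hne
    exact hp (Finset.mem_product.2 (mem_union_bdry_of_sub_ne_zero hf hyz hsub))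
  obtain ⟨R, hR⟩ : BddAbove {v | octantEmb hd x v ∈ A} :=
    (A.finite_toSet.preimage (octantEmb_injective hd x).injOn).bddAbove
  have hg : ∀ v ∉ Finset.Iic R, g v = 0 := fun v hv =>
    hf _ fun hvA => hv (Finset.mem_Iic.2 (hR hvA))
  calc f x ^ 2 = g 0 ^ 2 := by simp only [g, octantEmb_zero]
    _ ≤ 2 * ∑ v ∈ Finset.Iic R, ∑ l, (g v - g (v + Pi.single l 1)) ^ 2 :=
        sq_apply_zero_le_two_mul_sum_sq (by simpa using isLowerSet_Iic R) hg
    _ = 2 * ∑ p ∈ (Finset.Iic R ×ˢ univ).image edge, F p := by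
        rw [Finset.sum_image (octantEmb_edge_injective hd x).injOn, Finset.sum_product]
        simp only [F, g, octantEmb_add_single_mem_nbrs, if_true]
    _ ≤ 2 * ∑ p ∈ (Finset.Iic R ×ˢ univ).image edge ∪ T, F p := by
        gcongr ?_ * ?_
        exact Finset.sum_le_sum_of_subset_of_nonneg subset_union_left fun _ _ _ => by positivity
    _ = 2 * ∑ p ∈ T, F p := by
        rw [Finset.sum_subset Finset.subset_union_right fun p _ => hF_zero p]
    _ = 16 * d * ham d A f := by
        have hd0 : (d : ℝ) ≠ 0 := Nat.cast_ne_zero.2 (by omega)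
        rw [ham, Finset.sum_product]
        field_simp
        ring

/-- The precision matrix of the free field: `ham d A f` is its quadratic form in the values of `f`
on `A`, for every `f` vanishing off `A`. -/
noncomputable def gffMatrix (d : ℕ) : Matrix (Fin d → ℤ) (Fin d → ℤ) ℝ :=
  Matrix.of fun x y =>
    ((if x = y then (#(nbrs d x) : ℝ) else 0) - if y ∈ nbrs d x then 1 else 0) / (4 * d)

lemma sum_sum_mul_sub_sq {ι : Type*} (T : Finset ι) {w : ι → ι → ℝ} (hw : ∀ x y, w x y = w y x)
    (f : ι → ℝ) : ∑ x ∈ T, ∑ y ∈ T, w x y * (f x - f y) ^ 2 =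
      2 * ∑ x ∈ T, ((∑ y ∈ T, w x y) * f x ^ 2 - ∑ y ∈ T, w x y * f x * f y) := by
  have hswap : ∑ x ∈ T, ∑ y ∈ T, w x y * f y ^ 2 = ∑ x ∈ T, ∑ y ∈ T, w x y * f x ^ 2 := by
    rw [Finset.sum_comm]
    simp only [hw]
  calc ∑ x ∈ T, ∑ y ∈ T, w x y * (f x - f y) ^ 2
      = ∑ x ∈ T, ∑ y ∈ T, w x y * f x ^ 2 + ∑ x ∈ T, ∑ y ∈ T, w x y * f y ^ 2 -
          2 * ∑ x ∈ T, ∑ y ∈ T, w x y * f x * f y := by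
        simp only [Finset.mul_sum, ← Finset.sum_add_distrib, ← Finset.sum_sub_distrib]
        exact Finset.sum_congr rfl fun x _ => Finset.sum_congr rfl fun y _ => by ring
    _ = _ := by
        rw [hswap]
        simp only [Finset.sum_sub_distrib, Finset.sum_mul]
        ring

lemma ham_eq_quadForm {A : Finset (Fin d → ℤ)} {f : (Fin d → ℤ) → ℝ} (hf : ∀ x ∉ A, f x = 0) :
    ham d A f = quadForm (gffMatrix d) A f := by
  set T := A ∪ bdry d A
  set w : (Fin d → ℤ) → (Fin d → ℤ) → ℝ := fun x y => if y ∈ nbrs d x then 1 else 0 with hw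
  have hdeg (x) : (∑ y ∈ T, w x y) * f x ^ 2 = #(nbrs d x) * f x ^ 2 := by
    by_cases hx : x ∈ A
    · rw [hw, Finset.sum_boole, Finset.filter_mem_eq_inter,
        Finset.inter_eq_right.2 (nbrs_subset_union_bdry hx)]
    · simp [hf x hx]
  calc ham d A f
      = 1 / (8 * d) * ∑ x ∈ T, ∑ y ∈ T, w x y * (f x - f y) ^ 2 := by simp [ham, T, w]
    _ = 1 / (4 * d) * ∑ x ∈ T, (#(nbrs d x) * f x ^ 2 - ∑ y ∈ T, w x y * f x * f y) := by
        rw [sum_sum_mul_sub_sq T fun x y => by simp only [w, mem_nbrs_comm]]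
        simp only [hdeg]
        ring
    _ = quadForm (gffMatrix d) T f := by
        rw [quadForm, Finset.mul_sum]
        refine Finset.sum_congr rfl fun x hx => ?_
        simp only [gffMatrix, Matrix.of_apply, sub_div, sub_mul, Finset.sum_sub_distrib, ite_div,
          ite_mul, zero_div, zero_mul, Finset.sum_ite_eq, hx, if_true, mul_sub, Finset.mul_sum, w]
        congr 1
        · ring
        · exact Finset.sum_congr rfl fun y _ => by split_ifs <;> ring
    _ = quadForm (gffMatrix d) A f := (quadForm_of_subset _ Finset.subset_union_left hf).symm

lemma self_notMem_nbrs (x : Fin d → ℤ) : x ∉ nbrs d x := fun h => by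
  obtain ⟨i, s, h⟩ := mem_nbrs_iff.1 h
  have hi := congrFun h i
  cases s <;> simp at hi

lemma isStieltjesOn_gffMatrix (hd : 3 ≤ d) (A : Finset (Fin d → ℤ)) :
    IsStieltjesOn (1 / (16 * d)) (1 / 2) A (gffMatrix d) where
  coercivity_pos := by
    have : 0 < d := by omega
    positivity
  isSymm := Matrix.IsSymm.ext fun x y => by
    rcases eq_or_ne x y with rfl | hxy
    · rfl
    · simp [gffMatrix, hxy, hxy.symm, mem_nbrs_comm]
  offDiag_nonpos x _ y _ hxy := by
    rw [gffMatrix, Matrix.of_apply, if_neg hxy, zero_sub]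
    exact div_nonpos_of_nonpos_of_nonneg (neg_nonpos.2 (by split_ifs <;> norm_num)) (by positivity)
  rowSum_nonneg x hx := by
    have hcard : (#(A ∩ nbrs d x) : ℝ) ≤ #(nbrs d x) :=
      mod_cast Finset.card_le_card Finset.inter_subset_right
    simp only [gffMatrix, Matrix.of_apply, ← Finset.sum_div, Finset.sum_sub_distrib,
      Finset.sum_ite_eq, hx, if_true, Finset.sum_boole, Finset.filter_mem_eq_inter]
    exact div_nonneg (sub_nonneg.2 hcard) (by positivity)
  diag_le x _ := by
    have hcard : (#(nbrs d x) : ℝ) ≤ 2 * d := mod_cast card_nbrs_le x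
    have : (0 : ℝ) < d := mod_cast (by omega : 0 < d)
    simp only [gffMatrix, Matrix.of_apply, if_true, self_notMem_nbrs, if_false, sub_zero]
    rw [div_le_iff₀ (by positivity)]
    linarith
  coercive φ x hx := by
    have hoff : ∀ y ∉ A, (A : Set (Fin d → ℤ)).indicator φ y = 0 := fun y hy =>
      Set.indicator_of_notMem hy φ
    have heq : ∀ y ∈ A, (A : Set (Fin d → ℤ)).indicator φ y = φ y := fun y hy =>
      Set.indicator_of_mem (Finset.mem_coe.2 hy) φ
    have hgreen := sq_apply_le_mul_ham hd hoff x
    rw [ham_eq_quadForm hoff, dependsOn_quadForm _ A heq, heq x hx] at hgreen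
    have : (0 : ℝ) < d := mod_cast (by omega : 0 < d)
    rw [one_div, inv_mul_le_iff₀ (by positivity)]
    exact hgreen

end Lattice

section GFF

variable {d : ℕ} {A : Finset (Fin d → ℤ)}

lemma extz_of_mem {x : Fin d → ℤ} (hx : x ∈ A) (ψ : A → ℝ) : extz A ψ x = ψ ⟨x, hx⟩ := dif_pos hx

lemma extz_of_notMem {x : Fin d → ℤ} (hx : x ∉ A) (ψ : A → ℝ) : extz A ψ x = 0 := dif_neg hx

lemma measurable_extz (A : Finset (Fin d → ℤ)) : Measurable (extz A) := measurable_updateFinset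

lemma gffDensity_nonneg (A : Finset (Fin d → ℤ)) (ψ : A → ℝ) : 0 ≤ gffDensity d A ψ :=
  (exp_pos _).le

lemma gffDensity_eq_exp_neg_quadForm (A : Finset (Fin d → ℤ)) (ψ : A → ℝ) :
    gffDensity d A ψ = exp (-quadForm (gffMatrix d) A (extz A ψ)) := by
  rw [gffDensity, ham_eq_quadForm fun x hx => extz_of_notMem hx ψ]

lemma ofReal_gffDensity (A : Finset (Fin d → ℤ)) (ψ : A → ℝ) :
    ENNReal.ofReal (gffDensity d A ψ) = gaussWeight (gffMatrix d) A (extz A ψ) := by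
  rw [gffDensity_eq_exp_neg_quadForm, gaussWeight]

lemma measurable_gffDensity (A : Finset (Fin d → ℤ)) : Measurable (gffDensity d A) := by
  rw [funext (gffDensity_eq_exp_neg_quadForm A)]
  exact ((measurable_quadForm _ A).comp (measurable_extz A)).neg.exp

lemma gff_apply (A : Finset (Fin d → ℤ)) (E : Set (A → ℝ)) :
    gff d A E = (ENNReal.ofReal (gffZ d A))⁻¹ *
      ∫⁻ ψ in E, ENNReal.ofReal (gffDensity d A ψ) := by
  rw [gff, Measure.smul_apply, withDensity_apply', smul_eq_mul]

lemma gff_preimage_extz {E : Set ((Fin d → ℤ) → ℝ)} (hE : MeasurableSet E) :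
    gff d A (extz A ⁻¹' E) =
      (∫⋯∫⁻_A, E.indicator (gaussWeight (gffMatrix d) A)) 0 / ENNReal.ofReal (gffZ d A) := by
  simp only [gff_apply, ofReal_gffDensity]
  rw [← lintegral_indicator (measurable_extz A hE), ← ENNReal.div_eq_inv_mul]
  rfl

lemma integrable_gffDensity (hd : 3 ≤ d) (A : Finset (Fin d → ℤ)) :
    Integrable (gffDensity d A) := by
  refine ⟨(measurable_gffDensity A).aestronglyMeasurable, ?_⟩
  rw [hasFiniteIntegral_iff_ofReal (ae_of_all _ (gffDensity_nonneg A))]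
  simp only [ofReal_gffDensity]
  exact (lmarginal_gaussWeight_ne_top (isStieltjesOn_gffMatrix hd A) 0).lt_top

lemma gffZ_pos (hd : 3 ≤ d) (A : Finset (Fin d → ℤ)) : 0 < gffZ d A :=
  integral_exp_pos (integrable_gffDensity hd A)

lemma ofReal_gffZ (hd : 3 ≤ d) (A : Finset (Fin d → ℤ)) :
    ENNReal.ofReal (gffZ d A) = (∫⋯∫⁻_A, gaussWeight (gffMatrix d) A) 0 := by
  rw [gffZ, ofReal_integral_eq_lintegral_ofReal (integrable_gffDensity hd A)
    (ae_of_all _ (gffDensity_nonneg A))]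
  simp only [ofReal_gffDensity]
  rfl

/-- The event that a field on `S` takes values in the square well `[0, a]` at every point of
`A`. -/
def pinnedOn (S A : Finset (Fin d → ℤ)) (a : ℝ) : Set (S → ℝ) :=
  {ψ | ∀ x : S, (x : Fin d → ℤ) ∈ A → ψ x ∈ Set.Icc 0 a}

lemma wall_eq_preimage_extz (A : Finset (Fin d → ℤ)) :
    wall A = extz A ⁻¹' (A : Set (Fin d → ℤ)).pi fun _ => Set.Ici 0 := by
  ext ψ
  simp +contextual [wall, extz_of_mem]

variable {S : Finset (Fin d → ℤ)}

lemma pinnedOn_eq_preimage_extz (hA : A ⊆ S) (a : ℝ) :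
    pinnedOn S A a = extz S ⁻¹' (A : Set (Fin d → ℤ)).pi fun _ => Set.Icc 0 a := by
  ext ψ
  refine ⟨fun h x hx => ?_, fun h x hx => ?_⟩
  · rw [extz_of_mem (hA hx)]
    exact h ⟨x, hA hx⟩ hx
  · rw [← extz_of_mem x.2 ψ]
    exact h x hx

lemma measurableSet_pinnedOn (hA : A ⊆ S) (a : ℝ) : MeasurableSet (pinnedOn S A a) := by
  rw [pinnedOn_eq_preimage_extz hA]
  exact measurable_extz S (measurableSet_finset_pi A measurableSet_Icc)

lemma wall_inter_pinnedOn (hA : A ⊆ S) (a : ℝ) :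
    wall S ∩ pinnedOn S A a = extz S ⁻¹' ((((S \ A : Finset _) : Set (Fin d → ℤ)).pi
      fun _ => Set.Ici 0) ∩ (A : Set (Fin d → ℤ)).pi fun _ => Set.Icc 0 a) := by
  rw [wall_eq_preimage_extz, pinnedOn_eq_preimage_extz hA, ← Set.preimage_inter]
  congr 1
  ext φ
  refine and_congr_left fun hφ => ⟨fun h x hx => h x (Finset.sdiff_subset hx), fun h x hx => ?_⟩
  by_cases hxA : x ∈ A
  · exact (hφ x hxA).1
  · exact h x (Finset.mem_sdiff.2 ⟨hx, hxA⟩)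

lemma pow_card_mul_gff_wall_le (hd : 3 ≤ d) (hA : A ⊆ S) {a : ℝ} (ha : 0 ≤ a) :
    ENNReal.ofReal (siteConst (1 / (16 * d)) (1 / 2) * min (1 / 2) a) ^ #A *
      gff d (S \ A) (wall (S \ A)) ≤ gff d S (wall S ∩ pinnedOn S A a) := by
  have hunion : A ∪ S \ A = S := Finset.union_sdiff_of_subset hA
  set E := ((S \ A : Finset _) : Set (Fin d → ℤ)).pi fun _ => Set.Ici (0 : ℝ)
  have hE : MeasurableSet E := measurableSet_finset_pi _ measurableSet_Ici
  have hE_upper : IsUpperSet E := fun φ χ hφχ hφ x hx => (hφ x hx).trans (hφχ x)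
  have hM : IsStieltjesOn (1 / (16 * d)) (1 / 2) (A ∪ S \ A) (gffMatrix d) :=
    isStieltjesOn_gffMatrix hd _
  have hmain := hM.pow_card_mul_lmarginal_le Finset.disjoint_sdiff ha hE hE_upper
    (dependsOn_mem_pi _ _) 0
  rw [hunion, ← ofReal_gffZ hd, ← ofReal_gffZ hd] at hmain
  rw [wall_inter_pinnedOn hA, wall_eq_preimage_extz, gff_preimage_extz hE,
    gff_preimage_extz (hE.inter (measurableSet_finset_pi A measurableSet_Icc)), ← mul_div_assoc]
  refine ENNReal.div_le_of_le_mul ?_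
  rw [← ENNReal.mul_div_right_comm]
  exact (ENNReal.le_div_iff_mul_le
    (.inl (ENNReal.ofReal_pos.2 (gffZ_pos hd S)).ne') (.inl ENNReal.ofReal_ne_top)).2 hmain

end GFF

section Pinning

lemma exp_mul_sum_boole {ι : Type*} (S : Finset ι) (p : ι → Prop)
    [DecidablePred p] (b : ℝ) : exp (b * ∑ x ∈ S, if p x then 1 else 0) =
      ∑ A ∈ S.powerset, if ∀ x ∈ A, p x then (exp b - 1) ^ #A else 0 := by
  classical
  have hfactor (x : ι) :
      exp (b * if p x then 1 else 0) = 1 + if p x then exp b - 1 else 0 := by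
    split_ifs <;> simp
  simp only [Finset.mul_sum, exp_sum, hfactor, Finset.prod_one_add, Finset.prod_ite_zero,
    Finset.prod_const]

variable {d N : ℕ} {a b : ℝ}

lemma pinDensity_eq_sum (ψ : box d N → ℝ) :
    pinDensity d N a b ψ = ∑ A ∈ (box d N).powerset, (exp b - 1) ^ #A *
      (pinnedOn (box d N) A a).indicator (gffDensity d (box d N)) ψ := by
  classical
  have hsum : ∑ x : box d N, (if ψ x ∈ Set.Icc 0 a then (1 : ℝ) else 0) =
      ∑ x ∈ box d N, if extz (box d N) ψ x ∈ Set.Icc 0 a then 1 else 0 := by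
    symm
    rw [← Finset.sum_coe_sort]
    exact Finset.sum_congr rfl fun x _ => by rw [extz_of_mem x.2]
  rw [pinDensity, exp_add, hsum, exp_mul_sum_boole, Finset.mul_sum, ← gffDensity]
  refine Finset.sum_congr rfl fun A hA => ?_
  have hmem : ψ ∈ pinnedOn (box d N) A a ↔ ∀ x ∈ A, extz (box d N) ψ x ∈ Set.Icc 0 a := by
    rw [pinnedOn_eq_preimage_extz (Finset.mem_powerset.1 hA)]
    rfl
  simp only [Set.indicator_apply, hmem]
  split_ifs <;> ring

lemma integrable_pinDensity (hd : 3 ≤ d) : Integrable (pinDensity d N a b) := by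
  rw [funext pinDensity_eq_sum]
  exact integrable_finsetSum _ fun A hA => ((integrable_gffDensity hd _).indicator
    (measurableSet_pinnedOn (Finset.mem_powerset.1 hA) a)).const_mul _

lemma pinZ_pos (hd : 3 ≤ d) : 0 < pinZ d N a b :=
  integral_exp_pos (integrable_pinDensity hd)

lemma ofReal_pinDensity (hb : 0 ≤ b) (ψ : box d N → ℝ) :
    ENNReal.ofReal (pinDensity d N a b ψ) = ∑ A ∈ (box d N).powerset,
      ENNReal.ofReal (exp b - 1) ^ #A * (pinnedOn (box d N) A a).indicator
        (fun ψ => ENNReal.ofReal (gffDensity d (box d N) ψ)) ψ := by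
  have hb' : 0 ≤ exp b - 1 := sub_nonneg.2 (one_le_exp hb)
  have hind (A) : 0 ≤ (pinnedOn (box d N) A a).indicator (gffDensity d (box d N)) ψ :=
    Set.indicator_nonneg (fun ψ _ => gffDensity_nonneg _ ψ) ψ
  rw [pinDensity_eq_sum,
    ENNReal.ofReal_sum_of_nonneg fun A _ => mul_nonneg (by positivity) (hind A)]
  refine Finset.sum_congr rfl fun A _ => ?_
  rw [ENNReal.ofReal_mul (by positivity), ENNReal.ofReal_pow hb']
  congr 1
  exact (Set.indicator_comp_of_zero ENNReal.ofReal_zero).symm ▸ rfl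

lemma setLIntegral_ofReal_pinDensity (hb : 0 ≤ b) (E : Set (box d N → ℝ)) :
    ∫⁻ ψ in E, ENNReal.ofReal (pinDensity d N a b ψ) = ∑ A ∈ (box d N).powerset,
      ENNReal.ofReal (exp b - 1) ^ #A *
        ∫⁻ ψ in E ∩ pinnedOn (box d N) A a, ENNReal.ofReal (gffDensity d (box d N) ψ) := by
  have hmeas := (measurable_gffDensity (box d N)).ennreal_ofReal
  have hpinned {A} (hA : A ∈ (box d N).powerset) : MeasurableSet (pinnedOn (box d N) A a) :=
    measurableSet_pinnedOn (Finset.mem_powerset.1 hA) a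
  simp only [ofReal_pinDensity hb]
  rw [lintegral_finsetSum _ fun A hA => (hmeas.indicator (hpinned hA)).const_mul _]
  refine Finset.sum_congr rfl fun A hA => ?_
  rw [lintegral_const_mul _ (hmeas.indicator (hpinned hA)), setLIntegral_indicator (hpinned hA),
    Set.inter_comm]

lemma pin_apply (hd : 3 ≤ d) (hb : 0 ≤ b) (E : Set (box d N → ℝ)) :
    pin d N a b E = ENNReal.ofReal (gffZ d (box d N) / pinZ d N a b) *
      ∑ A ∈ (box d N).powerset,
        ENNReal.ofReal (exp b - 1) ^ #A * gff d (box d N) (E ∩ pinnedOn (box d N) A a) := by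
  have hZ := ENNReal.ofReal_pos.2 (gffZ_pos hd (box d N))
  rw [pin, Measure.smul_apply, withDensity_apply', setLIntegral_ofReal_pinDensity hb, smul_eq_mul,
    ENNReal.ofReal_div_of_pos (pinZ_pos hd), ENNReal.div_eq_inv_mul, mul_assoc]
  congr 1
  rw [Finset.mul_sum]
  refine Finset.sum_congr rfl fun A _ => ?_
  rw [gff_apply, mul_left_comm, ← mul_assoc (ENNReal.ofReal (gffZ _ _)),
    ENNReal.mul_inv_cancel hZ.ne' ENNReal.ofReal_ne_top, one_mul]

lemma wallOn_box (d N : ℕ) : wallOn d N (box d N) = wall (box d N) := by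
  simp [wallOn, wall]

end Pinning

lemma exp_log_add_log_add_log_mul {u c m : ℝ} (hu : 0 < u) (hc : 0 < c) (hm : 0 < m) (n : ℕ) :
    exp ((log u + log c + log m) * n) = u ^ n * (c * m) ^ n := by
  rw [← log_mul hu.ne' hc.ne', ← log_mul (mul_pos hu hc).ne' hm.ne', mul_comm, exp_nat_mul,
    exp_log (by positivity), ← mul_pow, mul_assoc]

/-- Lower bound for the hard-wall probability under the square-well pinning
measure: `P̃_{N,a,b}(Ω_N⁺) ≥ (Z_N/Z̃_{N,a,b}) ∑_{A ⊆ Λ_N} e^{J'|A|} P_{A^c}(Ω⁺_{A^c})`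
with `J' = log(e^b - 1) + log c + log (min (1/2) a)`. -/
theorem pinned_wall_probability_lower_bound (d : ℕ) (hd : 3 ≤ d) :
    ∃ c : ℝ, 0 < c ∧ ∀ N : ℕ, ∀ a b : ℝ, 0 < a → 0 < b →
      pin d N a b (wallOn d N (box d N)) ≥
        ENNReal.ofReal ((gffZ d (box d N) / pinZ d N a b) *
          ∑ A ∈ (box d N).powerset,
            Real.exp ((Real.log (Real.exp b - 1) + Real.log c +
                Real.log (min (1 / 2) a)) * A.card) *
              (gff d (box d N \ A) (wall (box d N \ A))).toReal) := by
  set c := siteConst (1 / (16 * d)) (1 / 2)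
  have hc : 0 < c := siteConst_pos (isStieltjesOn_gffMatrix hd ∅).coercivity_pos _
  refine ⟨c, hc, fun N a b ha hb => ?_⟩
  have hu : 0 < exp b - 1 := sub_pos.2 (one_lt_exp_iff.2 hb)
  have hm : 0 < min (1 / 2) a := lt_min (by norm_num) ha
  have hZ : 0 ≤ gffZ d (box d N) / pinZ d N a b := (div_pos (gffZ_pos hd _) (pinZ_pos hd)).le
  rw [wallOn_box, pin_apply hd hb.le, ENNReal.ofReal_mul hZ,
    ENNReal.ofReal_sum_of_nonneg fun A _ => by positivity]
  refine mul_le_mul_right (Finset.sum_le_sum fun A hA => ?_) _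
  rw [exp_log_add_log_add_log_mul hu hc hm, mul_assoc, ENNReal.ofReal_mul (by positivity),
    ENNReal.ofReal_mul (by positivity), ENNReal.ofReal_pow hu.le,
    ENNReal.ofReal_pow (by positivity)]
  gcongr
  calc ENNReal.ofReal (c * min (1 / 2) a) ^ #A *
        ENNReal.ofReal (gff d (box d N \ A) (wall (box d N \ A))).toReal
      ≤ ENNReal.ofReal (c * min (1 / 2) a) ^ #A * gff d (box d N \ A) (wall (box d N \ A)) := by
        gcongr
        exact ENNReal.ofReal_toReal_le
    _ ≤ gff d (box d N) (wall (box d N) ∩ pinnedOn (box d N) A a) :=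
        pow_card_mul_gff_wall_le hd (Finset.mem_powerset.1 hA) ha.le
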